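/- The functions ψ_l satisfy: (i) ψ₀ is twice continuously differentiable on (0,∞)×ℝ and v ∂ₓψ₀(x,v) = ∂_vvψ₀(x,v) for all (x,v) ∈ (0,∞)×ℝ; (ii) there exists a nonzero constant c* such that ψ₀(x,v) → c* v² as x → 0⁺, for every fixed v > 0; (iii) for every integer l ≥ 1, ∂ₓψ_l = ((3l+2)/3) ψ_{l−1} on (0,∞)×ℝ; (iv) for every ε ∈ (0, 1/3) there is c(ε) > 0 such that |ψ₀(x₁,v) − ψ₀(x₂,v)| ≤ c(ε) |x₁ − x₂|^{1−ε} whenever v ∈ (0,1] and 0 < x₁, x₂ ≤ v^{1/ε}; (v) for every integer k ≥ 0 there is c(k) > 0 such that |∂_v^k ψ₀(x,v)| ≤ c(k) whenever v ∈ (0,1], 0 < x ≤ v^{k+1} and x ≤ v³. -/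

import Mathlib

/-!
The function `ψ₀` is self-similar: `ψ₀(x, v) = x^(2/3) F(v / x^(1/3))`, where the profile `F` is a
combination of two Kummer series in `-y³/9`. Kummer's equation turns into
`F'' = (2 y F - y² F') / 3` with `F 0 = 1` and `F' 0 = C₀ / 9^(1/3) > 0`, and this equation is
exactly the partial differential equation in (i). Part (iii) is the identity
`d/dx [x^p M(-p, b, c/x)] = p x^(p-1) M(-p+1, b, c/x)`, which holds term by term, combined with the
recursion relating `C_l` to `C_{l-1}`.

The asymptotics use only the profile equation. A comparison argument shows that `F` and `F'` are
positive on `[0, ∞)` and that `F` is bounded below by a positive multiple of `y² + 6y` on `y ≥ 1`.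
The quantity `(2F - yF') / 3` is positive, so `F / y²` is decreasing and converges to a positive
limit; this limit is the constant `c*` of (ii). A decay lemma for `u' + (y²/3) u = f` then gives
`F'' = O(1)`, `F''' = O(y⁻⁴)` and, by induction on the differentiated equation,
`F⁽ⁿ⁾ = O(y⁻ⁿ⁻¹)` for `n ≥ 3` (`profile_bounds`). In the region `x ≤ v³`, where `v / x^(1/3) ≥ 1`,
the bound on `F''` yields `|∂ₓψ₀| ≤ K / v` and hence (iv), and the bounds on the derivatives of `F`
yield (v).
-/

noncomputable section

open MeasureTheory Set Filter
open scoped ENNReal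

/-- The one-dimensional phase space, with points `p = (x, v)`. -/
abbrev P2 : Type := ℝ × ℝ

/-- `hv` is the weak derivative of `h` in the second (velocity) variable on `D`. -/
def IsWeakVDeriv (D : Set P2) (h hv : P2 → ℝ) : Prop :=
  ∀ ψ : P2 → ℝ, ContDiff ℝ ((⊤ : ℕ∞) : WithTop ℕ∞) ψ → HasCompactSupport ψ →
    tsupport ψ ⊆ D →
    (∫ p in D, h p * fderiv ℝ ψ p ((0:ℝ), (1:ℝ))) = -∫ p in D, hv p * ψ p

/-- Kummer's confluent hypergeometric function `M(a,b,z) = Σ ((a)_k/(b)_k) z^k/k!`. -/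
def kummerM (a b z : ℝ) : ℝ :=
  ∑' k : ℕ, ((ascPochhammer ℝ k).eval a / (ascPochhammer ℝ k).eval b) * z ^ k /
    (Nat.factorial k : ℝ)

/-- The explicit solutions `ψ_l`. -/
def psiL (l : ℕ) (x v : ℝ) : ℝ :=
  x ^ ((3 * (l : ℝ) + 2) / 3) *
    (kummerM (-(3 * (l : ℝ) + 2) / 3) (2/3) (-(v ^ 3) / (9 * x))
      + (Real.Gamma (2/3) * Real.Gamma (-(3 * (l : ℝ) + 1) / 3))
          / (Real.Gamma (-(3 * (l : ℝ) + 2) / 3) * Real.Gamma (4/3))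
        * (v / (9 * x) ^ ((1:ℝ)/3)) * kummerM (-(3 * (l : ℝ) + 1) / 3) (4/3)
            (-(v ^ 3) / (9 * x)))

/-- partial derivative in the first (space) variable -/
def pdx (h : P2 → ℝ) : P2 → ℝ := fun p => fderiv ℝ h p ((1:ℝ), (0:ℝ))

/-- partial derivative in the second (velocity) variable -/
def pdv (h : P2 → ℝ) : P2 → ℝ := fun p => fderiv ℝ h p ((0:ℝ), (1:ℝ))

/-! ### Kummer's function -/

section Kummer

lemma hasSum_of_forall_eq {f g : ℕ → ℝ} {s : ℝ} (h : ∀ k, f k = g k) (hg : HasSum g s) :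
    HasSum f s := by
  rwa [funext h]

/-- The `k`-th term of the series defining `kummerM a b z`. -/
def kTerm (a b z : ℝ) (k : ℕ) : ℝ :=
  ((ascPochhammer ℝ k).eval a / (ascPochhammer ℝ k).eval b) * z ^ k / (Nat.factorial k : ℝ)

lemma pochhammer_pos {b : ℝ} (hb : 0 < b) (k : ℕ) : 0 < (ascPochhammer ℝ k).eval b :=
  ascPochhammer_pos k b hb

lemma pochhammer_shift (a : ℝ) (k : ℕ) :
    (ascPochhammer ℝ (k + 1)).eval a = a * (ascPochhammer ℝ k).eval (a + 1) := by
  rw [ascPochhammer_succ_left]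
  simp [Polynomial.eval_comp]

/-- Each factor `(a+j)/(b+j)` is at most `1 + |a|/b` in absolute value. -/
lemma pochhammer_ratio_bound {a b : ℝ} (hb : 0 < b) (k : ℕ) :
    |(ascPochhammer ℝ k).eval a / (ascPochhammer ℝ k).eval b| ≤ (1 + |a| / b) ^ k := by
  induction k with
  | zero => simp
  | succ k ih =>
    rw [ascPochhammer_succ_eval, ascPochhammer_succ_eval, mul_div_mul_comm, abs_mul, pow_succ]
    have hk : (0 : ℝ) ≤ k := Nat.cast_nonneg k
    have h1 : |(a + k) / (b + k)| ≤ 1 + |a| / b := by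
      rw [abs_div, abs_of_pos (by positivity : 0 < b + k), div_le_iff₀ (by positivity)]
      have h2 : |a + k| ≤ |a| + k := by
        calc |a + k| ≤ |a| + |(k : ℝ)| := abs_add_le _ _
          _ = |a| + k := by rw [abs_of_nonneg hk]
      have h3 : (1 + |a| / b) * (b + k) = b + k + |a| + |a| / b * k := by
        field_simp
        ring
      have h4 : 0 ≤ |a| / b * k := by positivity
      linarith
    exact mul_le_mul ih h1 (abs_nonneg _) (by positivity)

lemma kTerm_hasSum (a : ℝ) {b : ℝ} (hb : 0 < b) (z : ℝ) :
    HasSum (kTerm a b z) (kummerM a b z) := by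
  have hs : Summable (kTerm a b z) := by
    refine Summable.of_norm_bounded
      (g := fun k : ℕ => ((1 + |a| / b) * |z|) ^ k / (Nat.factorial k : ℝ))
      (Real.summable_pow_div_factorial _) fun k => ?_
    rw [kTerm, Real.norm_eq_abs, abs_div, abs_mul, abs_pow, Nat.abs_cast, mul_pow]
    have := pochhammer_ratio_bound (a := a) hb k
    gcongr
  exact hs.hasSum

lemma kTerm_succ (a : ℝ) {b : ℝ} (hb : 0 < b) (z : ℝ) (k : ℕ) :
    ((k + 1 : ℕ) : ℝ) * kTerm a b z (k + 1) = z * (a / b * kTerm (a + 1) (b + 1) z k) := by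
  have h1 := (pochhammer_pos (by linarith : 0 < b + 1) k).ne'
  have h2 : (Nat.factorial k : ℝ) ≠ 0 := by positivity
  have h3 : ((k : ℝ) + 1) ≠ 0 := by positivity
  simp only [kTerm, pochhammer_shift, Nat.factorial_succ]
  push_cast
  field_simp
  ring

/-- The Euler operator `z d/dz` multiplies the `k`-th term by `k`. -/
lemma kTerm_theta_hasSum (a : ℝ) {b : ℝ} (hb : 0 < b) (z : ℝ) :
    HasSum (fun k : ℕ => (k : ℝ) * kTerm a b z k)
      (z * (a / b * kummerM (a + 1) (b + 1) z)) := by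
  have h := ((kTerm_hasSum (a + 1) (by linarith : 0 < b + 1) z).mul_left (a / b)).mul_left z
  have h2 : HasSum (fun k : ℕ => ((k + 1 : ℕ) : ℝ) * kTerm a b z (k + 1))
      (z * (a / b * kummerM (a + 1) (b + 1) z)) :=
    hasSum_of_forall_eq (fun k => kTerm_succ a hb z k) h
  have h3 := (hasSum_nat_add_iff (f := fun k : ℕ => (k : ℝ) * kTerm a b z k) 1).1 h2
  simpa using h3

/-- `(z d/dz + a) M(a,b) = a M(a+1,b)`. -/
lemma kummer_raise_a (a : ℝ) {b : ℝ} (hb : 0 < b) (z : ℝ) :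
    z * (a / b * kummerM (a + 1) (b + 1) z) + a * kummerM a b z = a * kummerM (a + 1) b z := by
  have h1 := (kTerm_theta_hasSum a hb z).add ((kTerm_hasSum a hb z).mul_left a)
  have h2 := (kTerm_hasSum (a + 1) hb z).mul_left a
  refine h1.unique (hasSum_of_forall_eq (fun k => ?_) h2)
  have h3 := pochhammer_shift a k
  rw [ascPochhammer_succ_eval] at h3
  have : (ascPochhammer ℝ k).eval b ≠ 0 := (pochhammer_pos hb k).ne'
  simp only [kTerm]
  field_simp
  linear_combination z ^ k * h3

/-- `(z d/dz + b) M(a,b+1) = b M(a,b)`. -/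
lemma kummer_lower_b (a : ℝ) {b : ℝ} (hb : 0 < b) (z : ℝ) :
    z * (a / (b + 1) * kummerM (a + 1) (b + 1 + 1) z) + b * kummerM a (b + 1) z
      = b * kummerM a b z := by
  have hb1 : 0 < b + 1 := by linarith
  have h1 := (kTerm_theta_hasSum a hb1 z).add ((kTerm_hasSum a hb1 z).mul_left b)
  have h2 := (kTerm_hasSum a hb z).mul_left b
  refine h1.unique (hasSum_of_forall_eq (fun k => ?_) h2)
  have h3 := pochhammer_shift b k
  rw [ascPochhammer_succ_eval] at h3
  have h4 : (ascPochhammer ℝ k).eval b ≠ 0 := (pochhammer_pos hb k).ne'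
  have h5 : (ascPochhammer ℝ k).eval (b + 1) ≠ 0 := (pochhammer_pos hb1 k).ne'
  simp only [kTerm]
  field_simp
  linear_combination z ^ k * (ascPochhammer ℝ k).eval a * h3

lemma kummer_hasDerivAt (a : ℝ) {b : ℝ} (hb : 0 < b) (z : ℝ) :
    HasDerivAt (kummerM a b) (a / b * kummerM (a + 1) (b + 1) z) z := by
  set c : ℕ → ℝ := fun k => (ascPochhammer ℝ k).eval a / (ascPochhammer ℝ k).eval b with hc
  set R : ℝ := 1 + |a| / b with hR
  set r : ℝ := |z| + 1 with hr
  have hr0 : 0 ≤ r := by positivity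
  have hR0 : 0 ≤ R := by positivity
  have hu : Summable (fun k : ℕ => R ^ k * (k * r ^ (k - 1)) / (Nat.factorial k : ℝ)) := by
    rw [← summable_nat_add_iff 1]
    refine ((Real.summable_pow_div_factorial (R * r)).mul_left R).congr fun k => ?_
    have h3 : ((k : ℝ) + 1) ≠ 0 := by positivity
    rw [Nat.factorial_succ, Nat.add_sub_cancel]
    push_cast
    field_simp
    rw [mul_pow, pow_succ]
    ring
  have hD := hasDerivAt_tsum_of_isPreconnected (y := z) (y₀ := z) (t := Metric.ball (0 : ℝ) r)
    (g := fun k w => c k * w ^ k / (Nat.factorial k : ℝ))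
    (g' := fun k w => c k * (k * w ^ (k - 1)) / (Nat.factorial k : ℝ)) hu Metric.isOpen_ball
    (convex_ball (0 : ℝ) r).isPreconnected
    (fun k w _ => ((hasDerivAt_pow k w).const_mul (c k)).div_const _)
    (fun k w hw => by
      have hw' : |w| ≤ r := by
        rw [mem_ball_zero_iff, Real.norm_eq_abs] at hw
        exact hw.le
      have := pochhammer_ratio_bound (a := a) hb k
      rw [Real.norm_eq_abs, abs_div, abs_mul, abs_mul, abs_pow, Nat.abs_cast, Nat.abs_cast]
      gcongr)
    (by simp [hr]) (kTerm_hasSum a hb z).summable (by simp [hr])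
  have hd2 : ∑' k : ℕ, c k * (k * z ^ (k - 1)) / (Nat.factorial k : ℝ)
      = a / b * kummerM (a + 1) (b + 1) z := by
    have h := (kTerm_hasSum (a + 1) (by linarith : 0 < b + 1) z).mul_left (a / b)
    refine HasSum.tsum_eq ?_
    have h2 : HasSum (fun k : ℕ => c (k + 1) * (((k + 1 : ℕ) : ℝ) * z ^ (k + 1 - 1)) /
        (Nat.factorial (k + 1) : ℝ)) (a / b * kummerM (a + 1) (b + 1) z) := by
      refine hasSum_of_forall_eq (fun k => ?_) h
      have h1 := (pochhammer_pos (by linarith : 0 < b + 1) k).ne'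
      have h3 : ((k : ℝ) + 1) ≠ 0 := by positivity
      simp only [hc, kTerm, pochhammer_shift, Nat.factorial_succ, Nat.add_sub_cancel]
      push_cast
      field_simp
    have h3 := (hasSum_nat_add_iff
      (f := fun k : ℕ => c k * (k * z ^ (k - 1)) / (Nat.factorial k : ℝ)) 1).1 h2
    simpa using h3
  rw [← hd2]
  exact hD

lemma kummer_contDiff_nat (n : ℕ) : ∀ (a b : ℝ), 0 < b → ContDiff ℝ n (kummerM a b) := by
  induction n with
  | zero =>
    intro a b hb
    exact contDiff_zero.2 (continuous_iff_continuousAt.2 fun z =>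
      (kummer_hasDerivAt a hb z).continuousAt)
  | succ n ih =>
    intro a b hb
    push_cast
    rw [contDiff_succ_iff_deriv]
    refine ⟨fun z => (kummer_hasDerivAt a hb z).differentiableAt, by simp, ?_⟩
    have : deriv (kummerM a b) = fun z => a / b * kummerM (a + 1) (b + 1) z :=
      funext fun z => (kummer_hasDerivAt a hb z).deriv
    rw [this]
    exact contDiff_const.mul (ih _ _ (by linarith))

lemma kummer_contDiff (a : ℝ) {b : ℝ} (hb : 0 < b) :
    ContDiff ℝ ((⊤ : ℕ∞) : WithTop ℕ∞) (kummerM a b) :=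
  contDiff_infty.2 fun n => kummer_contDiff_nat n a b hb

/-- Kummer's differential equation `z M'' + b M' = z M' + a M`, with `M'` and `M''` expressed
through the contiguous functions. -/
lemma kummer_ode (a : ℝ) {b : ℝ} (hb : 0 < b) (z : ℝ) :
    z * (a / b * ((a + 1) / (b + 1) * kummerM (a + 1 + 1) (b + 1 + 1) z))
      + b * (a / b * kummerM (a + 1) (b + 1) z)
      = z * (a / b * kummerM (a + 1) (b + 1) z) + a * kummerM a b z := by
  rw [kummer_raise_a a hb z]
  have h := kummer_lower_b (a + 1) hb z
  have h2 : a * kummerM (a + 1) b z = a / b * (b * kummerM (a + 1) b z) := by field_simp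
  rw [h2, ← h]
  ring

end Kummer

/-! ### The profile equation `F'' = (2 y F - y² F') / 3` -/

section Profile

lemma monotoneOn_Ici_of_hasDerivAt {f f' : ℝ → ℝ} {a : ℝ}
    (hf : ∀ y, a ≤ y → HasDerivAt f (f' y) y) (h : ∀ y, a < y → 0 ≤ f' y) :
    MonotoneOn f (Ici a) := by
  refine monotoneOn_of_deriv_nonneg (convex_Ici a)
    (fun y hy => (hf y hy).continuousAt.continuousWithinAt) ?_ ?_
  · intro y hy
    rw [interior_Ici] at hy
    exact (hf y (mem_Ioi.1 hy).le).differentiableAt.differentiableWithinAt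
  · intro y hy
    rw [interior_Ici] at hy
    rw [(hf y (mem_Ioi.1 hy).le).deriv]
    exact h y hy

lemma hasDerivAt_expCube (y : ℝ) :
    HasDerivAt (fun t : ℝ => Real.exp (t ^ 3 / 9)) (Real.exp (y ^ 3 / 9) * (y ^ 2 / 3)) y := by
  have h := (((hasDerivAt_pow 3 y).div_const 9).exp)
  convert h using 1
  push_cast
  ring

/-- The integrating factor for `u' + (y²/3) u`. -/
lemma hasDerivAt_expCube_mul {u : ℝ → ℝ} {u' y : ℝ} (hu : HasDerivAt u u' y) :
    HasDerivAt (fun t : ℝ => Real.exp (t ^ 3 / 9) * u t)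
      (Real.exp (y ^ 3 / 9) * (u' + y ^ 2 / 3 * u y)) y := by
  refine ((hasDerivAt_expCube y).mul hu).congr_deriv ?_
  ring

/-- One-sided decay estimate: if `u' + (y²/3) u = f` with `f ≤ K y² y⁻ⁿ`, then
`u = O(y⁻ⁿ)` from above. For large `y` the function `A y⁻ⁿ` is a supersolution; the remaining
bounded interval is handled by compactness. -/
lemma decay_upper {u f : ℝ → ℝ} (n : ℕ)
    (hu : ∀ y, HasDerivAt u (f y - y ^ 2 / 3 * u y) y)
    (hf : ∃ K, ∀ y, 1 ≤ y → f y * y ^ n ≤ K * y ^ 2) :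
    ∃ K, ∀ y, 1 ≤ y → u y * y ^ n ≤ K := by
  obtain ⟨K, hK⟩ := hf
  have hucont : Continuous u := continuous_iff_continuousAt.2 fun y => (hu y).continuousAt
  -- beyond `Y` one has `n / y ≤ y² / 6`
  set Y : ℝ := 6 * n + 1 with hY
  have hn0 : (0 : ℝ) ≤ n := Nat.cast_nonneg n
  have hY1 : 1 ≤ Y := by linarith
  obtain ⟨B, hB⟩ := (isCompact_Icc (a := (1 : ℝ)) (b := Y)).exists_bound_of_continuousOn
    (f := fun y => u y * y ^ n) (by fun_prop)
  set A : ℝ := max B (6 * |K|) with hA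
  have hAB : B ≤ A := le_max_left _ _
  have hAK : 6 * |K| ≤ A := le_max_right _ _
  refine ⟨A, fun y hy => ?_⟩
  rcases le_total y Y with hyY | hyY
  · exact (le_abs_self _).trans ((hB y ⟨hy, hyY⟩).trans hAB)
  have hmono : MonotoneOn (fun t : ℝ => Real.exp (t ^ 3 / 9) * (A * (t ^ n)⁻¹ - u t)) (Ici Y) := by
    refine monotoneOn_Ici_of_hasDerivAt (f' := fun t => Real.exp (t ^ 3 / 9) *
      ((A * (-(n * t ^ (n - 1)) / (t ^ n) ^ 2) - (f t - t ^ 2 / 3 * u t))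
        + t ^ 2 / 3 * (A * (t ^ n)⁻¹ - u t))) ?_ ?_
    · intro t ht
      have ht0 : 0 < t := by linarith
      have h1 := (((hasDerivAt_pow n t).inv (pow_pos ht0 n).ne').const_mul A).sub (hu t)
      exact hasDerivAt_expCube_mul h1
    · intro t ht
      have ht1 : 1 ≤ t := by linarith
      have ht0 : 0 < t := by linarith
      have hp : 0 < t ^ n := pow_pos ht0 n
      have e1 : (n : ℝ) * t ^ (n - 1) / (t ^ n) ^ 2 = (n / t) / t ^ n := by
        rcases n with _ | m
        · simp
        · rw [Nat.add_sub_cancel, pow_succ]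
          field_simp
          ring
      have e2 : (A * (-(n * t ^ (n - 1)) / (t ^ n) ^ 2) - (f t - t ^ 2 / 3 * u t))
        + t ^ 2 / 3 * (A * (t ^ n)⁻¹ - u t)
          = (A * (t ^ 2 / 3 - n / t) - f t * t ^ n) / t ^ n := by
        rw [neg_div, e1]
        field_simp
        ring
      rw [e2]
      have h3 : (n : ℝ) / t ≤ t ^ 2 / 6 := by
        rw [div_le_iff₀ ht0]
        have : t ≤ t ^ 2 / 6 * t * 6 := by
          have : (1 : ℝ) ≤ t ^ 2 := one_le_pow₀ ht1
          nlinarith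
        linarith
      have hA0 : 0 ≤ A := le_trans (by positivity) hAK
      have h4 : A * (t ^ 2 / 6) ≤ A * (t ^ 2 / 3 - n / t) :=
        mul_le_mul_of_nonneg_left (by linarith) hA0
      have h5 : K * t ^ 2 ≤ A * (t ^ 2 / 6) := by
        have := le_abs_self K
        have h6 : 0 ≤ t ^ 2 := by positivity
        nlinarith
      have h6 := hK t ht1
      have : 0 ≤ A * (t ^ 2 / 3 - n / t) - f t * t ^ n := by linarith
      positivity
  have hfin := hmono (mem_Ici.2 le_rfl) (mem_Ici.2 hyY) hyY
  have hstart : 0 ≤ A * (Y ^ n)⁻¹ - u Y := by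
    have h1 : u Y * Y ^ n ≤ A := (le_abs_self _).trans ((hB Y ⟨hY1, le_rfl⟩).trans hAB)
    have hp : 0 < Y ^ n := by positivity
    rw [← div_eq_mul_inv, sub_nonneg, le_div_iff₀ hp]
    exact h1
  have hpos : 0 ≤ Real.exp (y ^ 3 / 9) * (A * (y ^ n)⁻¹ - u y) :=
    le_trans (mul_nonneg (Real.exp_pos _).le hstart) hfin
  have h2 := nonneg_of_mul_nonneg_right hpos (Real.exp_pos _)
  have hp : 0 < y ^ n := by positivity
  rw [← div_eq_mul_inv, sub_nonneg, le_div_iff₀ hp] at h2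
  exact h2

/-- Decay estimate: if `u' + (y²/3) u = f` with `f = O(y² y⁻ⁿ)`, then `u = O(y⁻ⁿ)`. -/
lemma decay {u f : ℝ → ℝ} (n : ℕ)
    (hu : ∀ y, HasDerivAt u (f y - y ^ 2 / 3 * u y) y)
    (hf : ∃ K, ∀ y, 1 ≤ y → |f y| * y ^ n ≤ K * y ^ 2) :
    ∃ K, ∀ y, 1 ≤ y → |u y| * y ^ n ≤ K := by
  obtain ⟨K, hK⟩ := hf
  obtain ⟨K₁, h₁⟩ := decay_upper n hu ⟨K, fun y hy => le_trans
    (mul_le_mul_of_nonneg_right (le_abs_self _) (by positivity)) (hK y hy)⟩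
  obtain ⟨K₂, h₂⟩ := decay_upper (u := fun y => -u y) (f := fun y => -f y) n
    (fun y => by
      refine (hu y).neg.congr_deriv ?_
      ring)
    ⟨K, fun y hy => le_trans
      (mul_le_mul_of_nonneg_right (neg_le_abs _) (by positivity)) (hK y hy)⟩
  refine ⟨max K₁ K₂, fun y hy => ?_⟩
  rcases abs_cases (u y) with ⟨h, _⟩ | ⟨h, _⟩ <;> rw [h]
  · exact (h₁ y hy).trans (le_max_left _ _)
  · exact (h₂ y hy).trans (le_max_right _ _)

/-- Comparison principle for `D'' + (y²/3) D' - (2y/3) D ≥ 0` on `[a, ∞)`, `a ≥ 0`: up to a first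
zero of `D` the function `exp (y³/9) D'` is nondecreasing, so `D` is nondecreasing there. -/
lemma comparison {D D' D'' : ℝ → ℝ} {a : ℝ} (ha : 0 ≤ a)
    (hD : ∀ y, HasDerivAt D (D' y) y) (hD' : ∀ y, HasDerivAt D' (D'' y) y)
    (hL : ∀ y, a ≤ y → 0 ≤ D'' y + y ^ 2 / 3 * D' y - 2 * y / 3 * D y)
    (h0 : 0 < D a) (h1 : 0 ≤ D' a) : ∀ y, a ≤ y → 0 < D y ∧ 0 ≤ D' y := by
  have hDc : Continuous D := continuous_iff_continuousAt.2 fun y => (hD y).continuousAt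
  have hDc' : Continuous D' := continuous_iff_continuousAt.2 fun y => (hD' y).continuousAt
  have key : ∀ t, a ≤ t → (∀ s, a ≤ s → s < t → 0 < D s) →
      ∀ s ∈ Icc a t, 0 ≤ D' s := by
    intro t hat hpos s hs
    have hm : MonotoneOn (fun t : ℝ => Real.exp (t ^ 3 / 9) * D' t) (Icc a t) := by
      refine monotoneOn_of_deriv_nonneg (convex_Icc a t) (by fun_prop) ?_ ?_
      · intro y _
        exact (hasDerivAt_expCube_mul (hD' y)).differentiableAt.differentiableWithinAt
      · intro y hy
        rw [interior_Icc] at hy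
        rw [(hasDerivAt_expCube_mul (hD' y)).deriv]
        have h2 := hL y hy.1.le
        have h3 := hpos y hy.1.le hy.2
        have h4 : 0 ≤ 2 * y / 3 * D y := by
          have : 0 ≤ y := by linarith [hy.1]
          positivity
        exact mul_nonneg (Real.exp_pos _).le (by linarith)
    have h5 := hm (left_mem_Icc.2 hat) hs hs.1
    exact nonneg_of_mul_nonneg_right
      (le_trans (mul_nonneg (Real.exp_pos _).le h1) h5) (Real.exp_pos _)
  have hpos : ∀ y, a ≤ y → 0 < D y := by
    intro y hy
    by_contra hneg
    push Not at hneg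
    have hcomp : IsCompact (Icc a y ∩ {t | D t ≤ 0}) :=
      isCompact_Icc.inter_right (isClosed_le hDc continuous_const)
    obtain ⟨t, ⟨hty, htD⟩, hmin⟩ := hcomp.exists_isLeast ⟨y, ⟨hy, le_rfl⟩, hneg⟩
    have hlt : ∀ s, a ≤ s → s < t → 0 < D s := by
      intro s hs hst
      by_contra hsn
      push Not at hsn
      exact absurd (hmin ⟨⟨hs, hst.le.trans hty.2⟩, hsn⟩) (not_le.2 hst)
    have hd := key t hty.1 hlt
    have hm : MonotoneOn D (Icc a t) := by
      refine monotoneOn_of_deriv_nonneg (convex_Icc a t) hDc.continuousOn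
        (fun y _ => (hD y).differentiableAt.differentiableWithinAt) ?_
      intro s hs
      rw [(hD s).deriv]
      exact hd s (interior_subset hs)
    have := hm (left_mem_Icc.2 hty.1) (right_mem_Icc.2 hty.1) hty.1
    have htD' : D t ≤ 0 := htD
    linarith
  intro y hy
  exact ⟨hpos y hy, key y hy (fun s hs _ => hpos s hs) y ⟨hy, le_rfl⟩⟩

variable {F : ℕ → ℝ → ℝ}

/-- The profile equation differentiated `n + 1` times; `F n` is the `n`-th derivative. -/
lemma profile_recurrence (hF : ∀ n y, HasDerivAt (F n) (F (n + 1) y) y)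
    (hode : ∀ y, F 2 y = (2 * y * F 0 y - y ^ 2 * F 1 y) / 3) (n : ℕ) :
    ∀ y, F (n + 3) y = (-(2 * n * y / 3) * F (n + 1) y - (n + 1) * (n - 2) / 3 * F n y)
      - y ^ 2 / 3 * F (n + 2) y := by
  induction n with
  | zero =>
    intro y
    have h1 : HasDerivAt (F 2) ((2 * F 0 y + 2 * y * F 1 y
        - (2 * y * F 1 y + y ^ 2 * F 2 y)) / 3) y := by
      have hid : HasDerivAt (fun t : ℝ => 2 * t) 2 y := by
        simpa using (hasDerivAt_id y).const_mul (2 : ℝ)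
      have hsq : HasDerivAt (fun t : ℝ => t ^ 2) (2 * y) y := by
        simpa using hasDerivAt_pow 2 y
      have := ((hid.mul (hF 0 y)).sub (hsq.mul (hF 1 y))).div_const 3
      exact this.congr_of_eventuallyEq (Eventually.of_forall hode)
    have h2 := (hF 2 y).unique h1
    push_cast
    norm_num at h2 ⊢
    linarith
  | succ n ih =>
    intro y
    have h1 : HasDerivAt (F (n + 3)) (((-(2 * n / 3)) * F (n + 1) y
        + -(2 * n * y / 3) * F (n + 2) y - (n + 1) * (n - 2) / 3 * F (n + 1) y)
        - (2 * y / 3 * F (n + 2) y + y ^ 2 / 3 * F (n + 3) y)) y := by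
      have hid : HasDerivAt (fun t : ℝ => -(2 * n * t / 3)) (-(2 * n / 3)) y := by
        refine (((hasDerivAt_id y).const_mul (2 * n : ℝ)).div_const 3).neg.congr_deriv ?_
        ring
      have hsq : HasDerivAt (fun t : ℝ => t ^ 2 / 3) (2 * y / 3) y := by
        simpa using (hasDerivAt_pow 2 y).div_const 3
      have := ((hid.mul (hF (n + 1) y)).sub ((hF n y).const_mul (((n : ℝ) + 1) * (n - 2) / 3))).sub
        (hsq.mul (hF (n + 2) y))
      exact this.congr_of_eventuallyEq (Eventually.of_forall ih)
    have h2 := (hF (n + 3) y).unique h1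
    rw [show n + 1 + 3 = n + 3 + 1 by ring, h2, show n + 1 + 2 = n + 3 by ring,
      show n + 1 + 1 = n + 2 by ring]
    push_cast
    ring

/-- Growth of a positive solution of the profile equation: it behaves like `c y²` with `c > 0`,
its first two derivatives are bounded by the corresponding powers, and from the third derivative
on they decay like `y ^ (-1-n)`, the quadratic part having been killed. -/
lemma profile_bounds (hF : ∀ n y, HasDerivAt (F n) (F (n + 1) y) y)
    (hode : ∀ y, F 2 y = (2 * y * F 0 y - y ^ 2 * F 1 y) / 3)
    (h0 : 0 < F 0 0) (h1 : 0 < F 1 0) :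
    (∃ c : ℝ, 0 < c ∧ Tendsto (fun y => F 0 y / y ^ 2) atTop (nhds c)) ∧
    (∃ K, ∀ y, 1 ≤ y → |F 0 y| ≤ K * y ^ 2) ∧ (∃ K, ∀ y, 1 ≤ y → |F 1 y| ≤ K * y) ∧
    (∃ K, ∀ y, 1 ≤ y → |F 2 y| ≤ K) ∧
    (∀ n, ∃ K, ∀ y, 1 ≤ y → |F (n + 3) y| * y ^ (n + 4) ≤ K) := by
  have hpos : ∀ y, 0 ≤ y → 0 < F 0 y ∧ 0 ≤ F 1 y :=
    comparison le_rfl (hF 0) (hF 1) (fun y _ => by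
      show 0 ≤ F 2 y + _ - _
      rw [hode y]
      apply le_of_eq
      ring) h0 h1.le
  -- `H` is the profile of the `x`-derivative; it satisfies `H' + (y²/3) H = F'/3`
  set H : ℝ → ℝ := fun y => (2 * F 0 y - y * F 1 y) / 3 with hHdef
  have hF2 : ∀ y, F 2 y = y * H y := fun y => by
    rw [hode y, hHdef]
    ring
  have hH : ∀ y, HasDerivAt H (F 1 y / 3 - y ^ 2 / 3 * H y) y := by
    intro y
    have := ((((hF 0 y).const_mul 2).sub ((hasDerivAt_id y).mul (hF 1 y))).div_const 3)
    refine this.congr_deriv ?_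
    have := hF2 y
    simp only [id_eq, Nat.reduceAdd] at *
    rw [this]
    ring
  have hHpos : ∀ y, 0 ≤ y → 0 < H y := by
    have hm : MonotoneOn (fun t : ℝ => Real.exp (t ^ 3 / 9) * H t) (Ici 0) := by
      refine monotoneOn_Ici_of_hasDerivAt (fun y _ => hasDerivAt_expCube_mul (hH y)) ?_
      intro y hy
      have := (hpos y hy.le).2
      exact mul_nonneg (Real.exp_pos _).le (by linarith)
    intro y hy
    have h2 := hm (mem_Ici.2 le_rfl) (mem_Ici.2 hy) hy
    have h3 : 0 < H 0 := by
      simp only [hHdef]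
      linarith
    exact pos_of_mul_pos_right (lt_of_lt_of_le (mul_pos (Real.exp_pos _) h3) h2)
      (Real.exp_pos _).le
  -- `(F / y²)' = -3 H / y³ < 0`
  have hanti : AntitoneOn (fun y => F 0 y / y ^ 2) (Ici 1) := by
    have hm : MonotoneOn (fun y => -(F 0 y / y ^ 2)) (Ici 1) := by
      refine monotoneOn_Ici_of_hasDerivAt (f' := fun y => 3 * H y / y ^ 3) ?_ ?_
      · intro y hy
        have hy0 : y ≠ 0 := by linarith
        refine (((hF 0 y).div (hasDerivAt_pow 2 y) (pow_ne_zero 2 hy0)).neg).congr_deriv ?_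
        simp only [hHdef]
        field_simp
        push_cast
        ring
      · intro y hy
        have := hHpos y (by linarith)
        have : 0 < y := by linarith
        positivity
    intro s hs t ht hst
    have := hm hs ht hst
    simp only at this ⊢
    linarith
  have hub : ∀ y, 1 ≤ y → F 0 y ≤ F 0 1 * y ^ 2 := by
    intro y hy
    have := hanti (mem_Ici.2 le_rfl) (mem_Ici.2 hy) hy
    simp only [one_pow, div_one] at this
    rwa [div_le_iff₀ (by positivity)] at this
  have hb0 : ∀ y, 1 ≤ y → |F 0 y| ≤ F 0 1 * y ^ 2 := fun y hy => by
    rw [abs_of_pos (hpos y (by linarith)).1]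
    exact hub y hy
  have hb1 : ∀ y, 1 ≤ y → |F 1 y| ≤ 2 * F 0 1 * y := fun y hy => by
    rw [abs_of_nonneg (hpos y (by linarith)).2]
    have h2 := hHpos y (by linarith)
    simp only [hHdef] at h2
    have h3 := hub y hy
    have h4 : y * F 1 y ≤ y * (2 * F 0 1 * y) := by nlinarith
    exact le_of_mul_le_mul_left h4 (by linarith)
  have hrec := profile_recurrence hF hode
  have hb2 : ∃ K, ∀ y, 1 ≤ y → |F 2 y| ≤ K := by
    obtain ⟨K, hK⟩ := decay (u := F 2) (f := fun y => 2 / 3 * F 0 y) 0 (fun y => by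
      refine (hF 2 y).congr_deriv ?_
      rw [hrec 0 y]
      push_cast
      ring) ⟨2 / 3 * F 0 1, fun y hy => by
        rw [abs_mul, abs_of_pos (by norm_num : (0 : ℝ) < 2 / 3), pow_zero, mul_one, mul_assoc]
        exact mul_le_mul_of_nonneg_left (hb0 y hy) (by norm_num)⟩
    exact ⟨K, fun y hy => by simpa using hK y hy⟩
  -- `H'` solves `u' + (y²/3) u = - y H / 3 = - F'' / 3`
  have hbH : ∃ K, ∀ y, 1 ≤ y → |F 1 y / 3 - y ^ 2 / 3 * H y| * y ^ 2 ≤ K := by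
    obtain ⟨K, hK⟩ := hb2
    refine decay (u := fun y => F 1 y / 3 - y ^ 2 / 3 * H y) (f := fun y => -(F 2 y / 3)) 2
      (fun y => ?_) ⟨K / 3, fun y hy => ?_⟩
    · have hsq : HasDerivAt (fun t : ℝ => t ^ 2 / 3) (2 * y / 3) y := by
        simpa using (hasDerivAt_pow 2 y).div_const 3
      refine (((hF 1 y).div_const 3).sub (hsq.mul (hH y))).congr_deriv ?_
      have := hF2 y
      simp only [Nat.reduceAdd] at *
      rw [this]
      ring
    · have : |-(F 2 y / 3)| ≤ K / 3 := by
        rw [abs_neg, abs_div, abs_of_pos (by norm_num : (0 : ℝ) < 3)]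
        linarith [hK y hy]
      exact mul_le_mul_of_nonneg_right this (by positivity)
  -- `F'''` solves `u' + (y²/3) u = 2 H'`
  have hb3 : ∃ K, ∀ y, 1 ≤ y → |F 3 y| * y ^ 4 ≤ K := by
    obtain ⟨K, hK⟩ := hbH
    refine decay (u := F 3) (f := fun y => 2 * (F 1 y / 3 - y ^ 2 / 3 * H y)) 4
      (fun y => ?_) ⟨2 * K, fun y hy => ?_⟩
    · refine (hF 3 y).congr_deriv ?_
      rw [hrec 1 y]
      have := hF2 y
      simp only [Nat.reduceAdd] at *
      rw [this]
      push_cast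
      ring
    · rw [abs_mul, abs_of_pos (by norm_num : (0 : ℝ) < 2)]
      have h5 := mul_le_mul_of_nonneg_right (hK y hy) (by positivity : 0 ≤ 2 * y ^ 2)
      calc _ = |F 1 y / 3 - y ^ 2 / 3 * H y| * y ^ 2 * (2 * y ^ 2) := by ring
        _ ≤ _ := h5
        _ = _ := by ring
  refine ⟨?_, ⟨_, hb0⟩, ⟨_, hb1⟩, hb2, ?_⟩
  · -- `y² + 6 y` is a subsolution on `[1, ∞)`, because `2 - 2 y² ≤ 0` there
    set m : ℝ := min (F 0 1 / 8) (F 1 1 / 8) with hm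
    have hF11 : 0 < F 1 1 := by
      have hmono : MonotoneOn (F 1) (Ici 0) :=
        monotoneOn_Ici_of_hasDerivAt (fun y _ => hF 1 y) fun y hy => by
          show 0 ≤ F 2 y
          rw [hF2 y]
          exact (mul_pos hy (hHpos y hy.le)).le
      exact lt_of_lt_of_le h1
        (hmono (mem_Ici.2 le_rfl) (mem_Ici.2 zero_le_one) zero_le_one)
    have hF01 := (hpos 1 zero_le_one).1
    have hm0 : 0 < m := lt_min (by positivity) (by positivity)
    have hm1 : m ≤ F 0 1 / 8 := min_le_left _ _
    have hm2 : m ≤ F 1 1 / 8 := min_le_right _ _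
    have hcmp := comparison (a := 1) (D := fun y => F 0 y - m * (y ^ 2 + 6 * y))
      (D' := fun y => F 1 y - m * (2 * y + 6)) (D'' := fun y => F 2 y - m * 2) zero_le_one
      (fun y => by
        have h2 : HasDerivAt (fun t : ℝ => t ^ 2 + 6 * t) (2 * y + 6) y := by
          refine ((hasDerivAt_pow 2 y).add ((hasDerivAt_id y).const_mul (6 : ℝ))).congr_deriv ?_
          push_cast
          ring
        exact (hF 0 y).sub (h2.const_mul m))
      (fun y => by
        have h2 : HasDerivAt (fun t : ℝ => 2 * t + 6) 2 y := by
          simpa using ((hasDerivAt_id y).const_mul (2 : ℝ)).add_const 6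
        exact (hF 1 y).sub (h2.const_mul m))
      (fun y hy => by
        have : F 2 y - m * 2 + y ^ 2 / 3 * (F 1 y - m * (2 * y + 6))
            - 2 * y / 3 * (F 0 y - m * (y ^ 2 + 6 * y)) = m * (2 * y ^ 2 - 2) := by
          rw [hode y]
          ring
        rw [this]
        have : 1 ≤ y ^ 2 := one_le_pow₀ hy
        exact mul_nonneg hm0.le (by linarith))
      (by
        show 0 < F 0 1 - m * (1 ^ 2 + 6 * 1)
        linarith)
      (by
        show 0 ≤ F 1 1 - m * (2 * 1 + 6)
        linarith)
    have hlow : ∀ y, 1 ≤ y → m ≤ F 0 y / y ^ 2 := by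
      intro y hy
      rw [le_div_iff₀ (by positivity)]
      have := (hcmp y hy).1
      nlinarith
    -- a globally antitone version of `F / y²`
    have hganti : Antitone (fun y => F 0 (max 1 y) / (max 1 y) ^ 2) := fun s t hst =>
      hanti (mem_Ici.2 (le_max_left _ _)) (mem_Ici.2 (le_max_left _ _)) (max_le_max le_rfl hst)
    have hbdd : BddBelow (range fun y => F 0 (max 1 y) / (max 1 y) ^ 2) :=
      ⟨m, by
        rintro _ ⟨y, rfl⟩
        exact hlow _ (le_max_left _ _)⟩
    refine ⟨_, lt_of_lt_of_le hm0 (le_ciInf fun y => hlow _ (le_max_left _ _)),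
      (tendsto_atTop_ciInf hganti hbdd).congr' ?_⟩
    filter_upwards [eventually_ge_atTop (1 : ℝ)] with y hy
    rw [max_eq_right hy]
  · have hQ : ∀ n : ℕ, (∃ K, ∀ y, 1 ≤ y → |(n : ℝ) * F (n + 2) y| * y ^ (n + 3) ≤ K) ∧
        (∃ K, ∀ y, 1 ≤ y → |F (n + 3) y| * y ^ (n + 4) ≤ K) := by
      intro n
      induction n with
      | zero => exact ⟨⟨0, fun y _ => by simp⟩, hb3⟩
      | succ n ih =>
        obtain ⟨⟨K₁, hK₁⟩, ⟨K₂, hK₂⟩⟩ := ih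
        refine ⟨⟨((n + 1 : ℕ) : ℝ) * K₂, fun y hy => ?_⟩, ?_⟩
        · rw [abs_mul, Nat.abs_cast, mul_assoc]
          exact mul_le_mul_of_nonneg_left (hK₂ y hy) (Nat.cast_nonneg _)
        · refine decay (u := F (n + 4)) (n := n + 5)
            (f := fun y => -(2 * (n + 2) * y / 3) * F (n + 3) y
              - (n + 3) / 3 * (n * F (n + 2) y)) (fun y => ?_)
            ⟨2 * (n + 2) / 3 * K₂ + (n + 3) / 3 * K₁, fun y hy => ?_⟩
          · refine (hF (n + 4) y).congr_deriv ?_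
            have := hrec (n + 2) y
            push_cast at this
            rw [show n + 4 + 1 = n + 2 + 3 by ring, this]
            ring_nf
          · have hy0 : 0 ≤ y := by linarith
            have e : |-(2 * (n + 2) * y / 3) * F (n + 3) y - (n + 3) / 3 * (n * F (n + 2) y)|
                ≤ 2 * (n + 2) / 3 * y * |F (n + 3) y| + (n + 3) / 3 * |n * F (n + 2) y| := by
              refine (abs_sub _ _).trans (le_of_eq ?_)
              rw [abs_mul, abs_mul ((n + 3 : ℝ) / 3), abs_neg,
                abs_of_nonneg (by positivity : (0 : ℝ) ≤ 2 * (n + 2) * y / 3),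
                abs_of_nonneg (by positivity : (0 : ℝ) ≤ (n + 3) / 3)]
              ring
            have a₁ := mul_le_mul_of_nonneg_left (hK₁ y hy)
              (by positivity : (0 : ℝ) ≤ (n + 3) / 3 * y ^ 2)
            have a₂ := mul_le_mul_of_nonneg_left (hK₂ y hy)
              (by positivity : (0 : ℝ) ≤ 2 * (n + 2) / 3 * y ^ 2)
            calc _ ≤ _ := mul_le_mul_of_nonneg_right e (by positivity)
              _ = 2 * (n + 2) / 3 * y ^ 2 * (|F (n + 3) y| * y ^ (n + 4))
                + (n + 3) / 3 * y ^ 2 * (|n * F (n + 2) y| * y ^ (n + 3)) := by ring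
              _ ≤ _ := add_le_add a₂ a₁
              _ = _ := by ring
    exact fun n => (hQ n).2

end Profile

/-! ### The functions `ψ_l` in terms of powers and of a profile -/

section Psi

/-- The constant `C_l`. -/
def psiC (l : ℕ) : ℝ :=
  (Real.Gamma (2/3) * Real.Gamma (-(3 * (l : ℝ) + 1) / 3))
    / (Real.Gamma (-(3 * (l : ℝ) + 2) / 3) * Real.Gamma (4/3))

lemma psiC_zero_pos : 0 < psiC 0 := by
  have h1 : Real.Gamma (2/3) = (-1/3) * Real.Gamma (-1/3) := by
    have := Real.Gamma_add_one (s := -1/3) (by norm_num)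
    norm_num at this ⊢
    exact this
  have h2 : Real.Gamma (1/3) = (-2/3) * Real.Gamma (-2/3) := by
    have := Real.Gamma_add_one (s := -2/3) (by norm_num)
    norm_num at this ⊢
    exact this
  have p1 : 0 < Real.Gamma (2/3) := Real.Gamma_pos_of_pos (by norm_num)
  have p2 : 0 < Real.Gamma (1/3) := Real.Gamma_pos_of_pos (by norm_num)
  have p3 : 0 < Real.Gamma (4/3) := Real.Gamma_pos_of_pos (by norm_num)
  have n1 : Real.Gamma (-1/3) < 0 := by linarith
  have n2 : Real.Gamma (-2/3) < 0 := by linarith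
  simp only [psiC, Nat.cast_zero, mul_zero, zero_add]
  exact div_pos_of_neg_of_neg (mul_neg_of_pos_of_neg p1 n1) (mul_neg_of_neg_of_pos n2 p3)

/-- The recursion for `C_l`, from the functional equation of `Γ` in numerator and denominator. -/
lemma psiC_succ (m : ℕ) :
    psiC (m + 1) * ((m : ℝ) + 1 + 1/3) = ((m : ℝ) + 1 + 2/3) * psiC m := by
  have hm : (0 : ℝ) ≤ m := Nat.cast_nonneg m
  have h1 : Real.Gamma (-(3 * (m : ℝ) + 1) / 3)
      = (-(3 * ((m + 1 : ℕ) : ℝ) + 1) / 3) * Real.Gamma (-(3 * ((m + 1 : ℕ) : ℝ) + 1) / 3) := by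
    rw [← Real.Gamma_add_one (by push_cast; linarith)]
    congr 1
    push_cast
    ring
  have h2 : Real.Gamma (-(3 * (m : ℝ) + 2) / 3)
      = (-(3 * ((m + 1 : ℕ) : ℝ) + 2) / 3) * Real.Gamma (-(3 * ((m + 1 : ℕ) : ℝ) + 2) / 3) := by
    rw [← Real.Gamma_add_one (by push_cast; linarith)]
    congr 1
    push_cast
    ring
  simp only [psiC]
  rw [h1, h2]
  set A := Real.Gamma (-(3 * ((m + 1 : ℕ) : ℝ) + 1) / 3)
  set B := Real.Gamma (-(3 * ((m + 1 : ℕ) : ℝ) + 2) / 3)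
  have h3 : (m : ℝ) + 1 + 2/3 ≠ 0 := by positivity
  have e1 : -(3 * ((m + 1 : ℕ) : ℝ) + 1) / 3 = -((m : ℝ) + 1 + 1/3) := by
    push_cast
    ring
  have e2 : -(3 * ((m + 1 : ℕ) : ℝ) + 2) / 3 = -((m : ℝ) + 1 + 2/3) := by
    push_cast
    ring
  rw [e1, e2]
  set p := (m : ℝ) + 1 + 1/3
  set q := (m : ℝ) + 1 + 2/3
  have : Real.Gamma (2/3) * (-p * A) / (-q * B * Real.Gamma (4/3))
      = (p / q) * (Real.Gamma (2/3) * A / (B * Real.Gamma (4/3))) := by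
    rw [← mul_div_mul_comm, ← neg_div_neg_eq (p * _)]
    congr 1 <;> ring
  rw [this]
  field_simp

lemma psiL_eq_sum (l : ℕ) {x : ℝ} (hx : 0 < x) (v : ℝ) :
    psiL l x v = x ^ ((l : ℝ) + 2/3) * kummerM (-((l : ℝ) + 2/3)) (2/3) (-(v ^ 3) / (9 * x))
      + psiC l * (v / 9 ^ ((1:ℝ)/3)) *
        (x ^ ((l : ℝ) + 1/3) * kummerM (-((l : ℝ) + 1/3)) (4/3) (-(v ^ 3) / (9 * x))) := by
  have e1 : -(3 * (l : ℝ) + 2) / 3 = -((l : ℝ) + 2/3) := by ring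
  have e2 : -(3 * (l : ℝ) + 1) / 3 = -((l : ℝ) + 1/3) := by ring
  have e3 : (3 * (l : ℝ) + 2) / 3 = ((l : ℝ) + 1/3) + 1/3 := by ring
  have e4 : (l : ℝ) + 2/3 = ((l : ℝ) + 1/3) + 1/3 := by ring
  have h9 : (0 : ℝ) < 9 ^ ((1:ℝ)/3) := by positivity
  have hx3 : 0 < x ^ ((1:ℝ)/3) := by positivity
  rw [psiL, ← psiC, e1, e2, e3, Real.mul_rpow (by norm_num) hx.le, e4, Real.rpow_add hx]
  field_simp

/-- `d/dx [x^p M(-p, b, c/x)] = p x^(p-1) M(-p+1, b, c/x)`. -/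
lemma hasDerivAt_rpow_mul_kummer (p c : ℝ) {b : ℝ} (hb : 0 < b) {x : ℝ} (hx : 0 < x) :
    HasDerivAt (fun s => s ^ p * kummerM (-p) b (-c / (9 * s)))
      (p * (x ^ (p - 1) * kummerM (-(p - 1)) b (-c / (9 * x)))) x := by
  have h1 : HasDerivAt (fun s : ℝ => -c / (9 * s)) (c / (9 * x ^ 2)) x := by
    have h2 : HasDerivAt (fun s : ℝ => 9 * s) 9 x := by
      simpa using (hasDerivAt_id x).const_mul (9 : ℝ)
    refine ((hasDerivAt_const x (-c)).div h2 (by positivity)).congr_deriv ?_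
    field_simp
    ring
  have h3 := (Real.hasDerivAt_rpow_const (p := p) (Or.inl hx.ne')).mul
    ((kummer_hasDerivAt (-p) hb (-c / (9 * x))).comp x h1)
  refine h3.congr_deriv ?_
  have h4 := kummer_raise_a (-p) hb (-c / (9 * x))
  rw [show -(p - 1) = -p + 1 by ring]
  have h5 : x ^ p = x ^ (p - 1) * x := by
    rw [← Real.rpow_add_one hx.ne']
    congr 1
    ring
  simp only [Function.comp]
  rw [h5]
  have h6 : p * (x ^ (p - 1) * kummerM (-p + 1) b (-c / (9 * x)))
      = -x ^ (p - 1) * (-p * kummerM (-p + 1) b (-c / (9 * x))) := by ring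
  rw [h6, ← h4]
  field_simp
  ring

lemma psiL_hasDerivAt_x (m : ℕ) {x : ℝ} (hx : 0 < x) (v : ℝ) :
    HasDerivAt (fun s => psiL (m + 1) s v)
      ((3 * ((m + 1 : ℕ) : ℝ) + 2) / 3 * psiL m x v) x := by
  have h1 := (hasDerivAt_rpow_mul_kummer ((m + 1 : ℕ) + 2/3) (v ^ 3)
    (by norm_num : (0 : ℝ) < 2/3) hx).add
    ((hasDerivAt_rpow_mul_kummer ((m + 1 : ℕ) + 1/3) (v ^ 3)
    (by norm_num : (0 : ℝ) < 4/3) hx).const_mul (psiC (m + 1) * (v / 9 ^ ((1:ℝ)/3))))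
  refine (h1.congr_of_eventuallyEq ?_).congr_deriv ?_
  · filter_upwards [lt_mem_nhds hx] with s hs
    exact psiL_eq_sum (m + 1) hs v
  · rw [psiL_eq_sum m hx v]
    have h2 := psiC_succ m
    push_cast
    rw [show (m : ℝ) + 1 + 2/3 - 1 = m + 2/3 by ring, show (m : ℝ) + 1 + 1/3 - 1 = m + 1/3 by ring]
    linear_combination (v / 9 ^ ((1:ℝ)/3)) *
      (x ^ ((m : ℝ) + 1/3) * kummerM (-((m : ℝ) + 1/3)) (4/3) (-(v ^ 3) / (9 * x))) * h2

/-- The self-similar profile: `ψ₀(x,v) = x^(2/3) F(v / x^(1/3))` with `F = psiProfile`. -/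
def psiProfile (y : ℝ) : ℝ :=
  kummerM (-(2/3)) (2/3) (-(y ^ 3) / 9)
    + psiC 0 / 9 ^ ((1:ℝ)/3) * (y * kummerM (-(1/3)) (4/3) (-(y ^ 3) / 9))

lemma cbrt_pow_three {x : ℝ} (hx : 0 < x) : (x ^ ((1:ℝ)/3)) ^ 3 = x := by
  rw [← Real.rpow_natCast, ← Real.rpow_mul hx.le]
  norm_num

lemma psiL_zero_eq {x : ℝ} (hx : 0 < x) (v : ℝ) :
    psiL 0 x v = (x ^ ((1:ℝ)/3)) ^ 2 * psiProfile (v / x ^ ((1:ℝ)/3)) := by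
  rw [psiL_eq_sum 0 hx v, psiProfile]
  have hs := cbrt_pow_three hx
  have hs0 : 0 < x ^ ((1:ℝ)/3) := by positivity
  have e1 : x ^ (((0 : ℕ) : ℝ) + 2/3) = (x ^ ((1:ℝ)/3)) ^ 2 := by
    rw [← Real.rpow_natCast, ← Real.rpow_mul hx.le]
    norm_num
  have e2 : -((v / x ^ ((1:ℝ)/3)) ^ 3) / 9 = -(v ^ 3) / (9 * x) := by
    rw [div_pow, hs]
    field_simp
  rw [e1, e2]
  simp only [Nat.cast_zero, zero_add]
  field_simp

lemma psiProfile_contDiff : ContDiff ℝ ((⊤ : ℕ∞) : WithTop ℕ∞) psiProfile := by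
  have h1 := kummer_contDiff (-(2/3)) (b := 2/3) (by norm_num)
  have h2 := kummer_contDiff (-(1/3)) (b := 4/3) (by norm_num)
  have h3 : ContDiff ℝ ((⊤ : ℕ∞) : WithTop ℕ∞) (fun y : ℝ => -(y ^ 3) / 9) := by fun_prop
  exact (h1.comp h3).add (contDiff_const.mul (contDiff_id.mul (h2.comp h3)))

lemma kummer_cube_hasDerivAt (a : ℝ) {b : ℝ} (hb : 0 < b) (y : ℝ) :
    HasDerivAt (fun t : ℝ => kummerM a b (-(t ^ 3) / 9))
      (a / b * kummerM (a + 1) (b + 1) (-(y ^ 3) / 9) * (-(y ^ 2) / 3)) y := by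
  have h1 : HasDerivAt (fun t : ℝ => -(t ^ 3) / 9) (-(y ^ 2) / 3) y := by
    refine ((hasDerivAt_pow 3 y).neg.div_const 9).congr_deriv ?_
    push_cast
    ring
  exact (kummer_hasDerivAt a hb _).comp y h1

/-- The derivatives of the profile, indexed by their order. -/
def psiF (n : ℕ) : ℝ → ℝ := iteratedDeriv n psiProfile

lemma psiF_zero : psiF 0 = psiProfile := iteratedDeriv_zero

lemma psiF_hasDerivAt (n : ℕ) (y : ℝ) : HasDerivAt (psiF n) (psiF (n + 1) y) y := by
  have h := (psiProfile_contDiff.differentiable_iteratedDeriv n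
    (by exact_mod_cast ENat.natCast_lt_top n)) y
  rw [psiF, psiF, iteratedDeriv_succ]
  exact h.hasDerivAt

lemma psiF_one (y : ℝ) : psiF 1 y =
    (-(2/3)) / (2/3) * kummerM (-(2/3) + 1) (2/3 + 1) (-(y ^ 3) / 9) * (-(y ^ 2) / 3)
    + psiC 0 / 9 ^ ((1:ℝ)/3) * (1 * kummerM (-(1/3)) (4/3) (-(y ^ 3) / 9)
      + y * ((-(1/3)) / (4/3) * kummerM (-(1/3) + 1) (4/3 + 1) (-(y ^ 3) / 9)
        * (-(y ^ 2) / 3))) := by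
  have h := (kummer_cube_hasDerivAt (-(2/3)) (by norm_num : (0 : ℝ) < 2/3) y).add
    (((hasDerivAt_id y).mul (kummer_cube_hasDerivAt (-(1/3))
      (by norm_num : (0 : ℝ) < 4/3) y)).const_mul (psiC 0 / 9 ^ ((1:ℝ)/3)))
  have h2 := psiF_hasDerivAt 0 y
  rw [psiF_zero] at h2
  exact h2.unique h

/-- Kummer's equation for the two series gives the profile equation. -/
lemma psiF_ode (y : ℝ) : psiF 2 y = (2 * y * psiF 0 y - y ^ 2 * psiF 1 y) / 3 := by
  have hsq : HasDerivAt (fun t : ℝ => -(t ^ 2) / 3) (-(2 * y) / 3) y := by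
    refine ((hasDerivAt_pow 2 y).neg.div_const 3).congr_deriv ?_
    push_cast
    ring
  have k1 := kummer_cube_hasDerivAt (-(2/3) + 1) (by norm_num : (0 : ℝ) < 2/3 + 1) y
  have k2 := kummer_cube_hasDerivAt (-(1/3)) (by norm_num : (0 : ℝ) < 4/3) y
  have k3 := kummer_cube_hasDerivAt (-(1/3) + 1) (by norm_num : (0 : ℝ) < 4/3 + 1) y
  have h := ((k1.const_mul ((-(2/3)) / (2/3))).mul hsq).add
    (((k2.const_mul 1).add ((hasDerivAt_id y).mul
      ((k3.const_mul ((-(1/3)) / (4/3))).mul hsq))).const_mul (psiC 0 / 9 ^ ((1:ℝ)/3)))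
  have h2 : psiF 2 y = _ := (psiF_hasDerivAt 1 y).unique
    (h.congr_of_eventuallyEq (Eventually.of_forall psiF_one))
  have o1 := kummer_ode (-(2/3)) (by norm_num : (0 : ℝ) < 2/3) (-(y ^ 3) / 9)
  have o2 := kummer_ode (-(1/3)) (by norm_num : (0 : ℝ) < 4/3) (-(y ^ 3) / 9)
  rw [h2, psiF_one, psiF_zero, psiProfile]
  simp only [id_eq, Pi.mul_apply]
  linear_combination (-y) * o1 - psiC 0 / 9 ^ ((1:ℝ)/3) * y ^ 2 * o2

lemma kummer_at_zero (a b : ℝ) : kummerM a b 0 = 1 := by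
  rw [kummerM, tsum_eq_single 0 (fun k hk => by simp [hk])]
  simp

lemma psiF_zero_pos : 0 < psiF 0 0 := by
  rw [psiF_zero, psiProfile]
  simp [kummer_at_zero]

lemma psiF_one_pos : 0 < psiF 1 0 := by
  rw [psiF_one]
  have := psiC_zero_pos
  simp [kummer_at_zero]
  positivity

/-! ### Derivatives of `ψ₀` -/

lemma cbrt_hasDerivAt {x : ℝ} (hx : 0 < x) :
    HasDerivAt (fun s : ℝ => s ^ ((1:ℝ)/3)) (1 / (3 * (x ^ ((1:ℝ)/3)) ^ 2)) x := by
  refine (Real.hasDerivAt_rpow_const (p := (1:ℝ)/3) (Or.inl hx.ne')).congr_deriv ?_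
  have hs0 : 0 < x ^ ((1:ℝ)/3) := by positivity
  have h1 : x ^ ((1:ℝ)/3 - 1) * (x ^ ((1:ℝ)/3)) ^ 2 = 1 := by
    rw [← Real.rpow_natCast, ← Real.rpow_mul hx.le, ← Real.rpow_add hx]
    norm_num
  rw [eq_div_iff (by positivity)]
  linear_combination h1

lemma psiL_zero_hasDerivAt_x {x : ℝ} (hx : 0 < x) (v : ℝ) :
    HasDerivAt (fun s => psiL 0 s v)
      ((2 * psiF 0 (v / x ^ ((1:ℝ)/3)) - v / x ^ ((1:ℝ)/3) * psiF 1 (v / x ^ ((1:ℝ)/3))) / 3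
        / x ^ ((1:ℝ)/3)) x := by
  have hs0 : 0 < x ^ ((1:ℝ)/3) := by positivity
  have h1 := cbrt_hasDerivAt hx
  have h2 := (h1.pow 2).mul ((psiF_hasDerivAt 0 (v / x ^ ((1:ℝ)/3))).comp x
    ((hasDerivAt_const x v).div h1 hs0.ne'))
  refine (h2.congr_of_eventuallyEq ?_).congr_deriv ?_
  · filter_upwards [lt_mem_nhds hx] with s hs
    rw [psiL_zero_eq hs v, ← psiF_zero]
    rfl
  · simp only [Function.comp, Pi.div_apply, Pi.pow_apply]
    field_simp
    push_cast
    ring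

/-- The `v`-derivative of the self-similar expression `A F⁽ⁿ⁾(v/σ)` at fixed `x`. -/
lemma psiF_scaled_hasDerivAt_v (n : ℕ) (A σ v : ℝ) :
    HasDerivAt (fun w => A * psiF n (w / σ)) (A * (psiF (n + 1) (v / σ) / σ)) v := by
  have h := ((psiF_hasDerivAt n (v / σ)).comp v ((hasDerivAt_id v).div_const σ)).const_mul A
  refine h.congr_deriv ?_
  ring

lemma pdv_eq {f : P2 → ℝ} {p : P2} {d : ℝ} (hf : DifferentiableAt ℝ f p)
    (hd : HasDerivAt (fun w => f (p.1, w)) d p.2) : pdv f p = d := by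
  have h1 : HasDerivAt (fun w : ℝ => ((p.1, w) : P2)) ((0:ℝ), (1:ℝ)) p.2 :=
    (hasDerivAt_const p.2 p.1).prodMk (hasDerivAt_id p.2)
  exact (HasFDerivAt.comp_hasDerivAt (x := p.2) (f := fun w : ℝ => ((p.1, w) : P2))
    hf.hasFDerivAt h1).unique hd

lemma pdx_eq {f : P2 → ℝ} {p : P2} {d : ℝ} (hf : DifferentiableAt ℝ f p)
    (hd : HasDerivAt (fun s => f (s, p.2)) d p.1) : pdx f p = d := by
  have h1 : HasDerivAt (fun s : ℝ => ((s, p.2) : P2)) ((1:ℝ), (0:ℝ)) p.1 :=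
    (hasDerivAt_id p.1).prodMk (hasDerivAt_const p.1 p.2)
  exact (HasFDerivAt.comp_hasDerivAt (x := p.1) (f := fun s : ℝ => ((s, p.2) : P2))
    hf.hasFDerivAt h1).unique hd

lemma psiF_contDiff (n : ℕ) : ContDiff ℝ 2 (psiF n) := by
  have h : ContDiff ℝ ((2 + n : ℕ) : WithTop ℕ∞) psiProfile :=
    contDiff_infty.1 psiProfile_contDiff _
  rw [psiF, iteratedDeriv_eq_iterate]
  exact ContDiff.iterate_deriv' 2 n h

lemma selfsimilar_contDiffAt (n j : ℕ) {p : P2} (hp : 0 < p.1) :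
    ContDiffAt ℝ 2 (fun q : P2 => (q.1 ^ ((1:ℝ)/3)) ^ j * psiF n (q.2 / q.1 ^ ((1:ℝ)/3))) p := by
  have h1 : ContDiffAt ℝ 2 (fun q : P2 => q.1 ^ ((1:ℝ)/3)) p :=
    contDiffAt_fst.rpow_const_of_ne hp.ne'
  have hs0 : p.1 ^ ((1:ℝ)/3) ≠ 0 := by positivity
  exact (h1.pow j).mul ((psiF_contDiff n).contDiffAt.comp p (contDiffAt_snd.div h1 hs0))

lemma eventually_fst_pos {p : P2} (hp : 0 < p.1) : ∀ᶠ q : P2 in nhds p, 0 < q.1 :=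
  continuousAt_fst.eventually (lt_mem_nhds hp)

lemma psiL_zero_contDiffAt {p : P2} (hp : 0 < p.1) :
    ContDiffAt ℝ 2 (fun q : P2 => psiL 0 q.1 q.2) p := by
  refine (selfsimilar_contDiffAt 0 2 hp).congr_of_eventuallyEq ?_
  filter_upwards [eventually_fst_pos hp] with q hq
  rw [psiL_zero_eq hq, psiF_zero]

lemma pdv_psi {p : P2} (hp : 0 < p.1) :
    pdv (fun q : P2 => psiL 0 q.1 q.2) p
      = (p.1 ^ ((1:ℝ)/3)) ^ 1 * psiF 1 (p.2 / p.1 ^ ((1:ℝ)/3)) := by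
  refine pdv_eq ((psiL_zero_contDiffAt hp).differentiableAt (by norm_num)) ?_
  have hs0 : p.1 ^ ((1:ℝ)/3) ≠ 0 := by positivity
  have h := psiF_scaled_hasDerivAt_v 0 ((p.1 ^ ((1:ℝ)/3)) ^ 2) (p.1 ^ ((1:ℝ)/3)) p.2
  refine (h.congr_of_eventuallyEq (Eventually.of_forall fun w => ?_)).congr_deriv ?_
  · simp only [psiF_zero]
    exact psiL_zero_eq hp w
  · field_simp

lemma pdv_pdv_psi {p : P2} (hp : 0 < p.1) :
    pdv (pdv (fun q : P2 => psiL 0 q.1 q.2)) p = psiF 2 (p.2 / p.1 ^ ((1:ℝ)/3)) := by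
  have h0 : pdv (fun q : P2 => psiL 0 q.1 q.2) =ᶠ[nhds p]
      fun q => (q.1 ^ ((1:ℝ)/3)) ^ 1 * psiF 1 (q.2 / q.1 ^ ((1:ℝ)/3)) := by
    filter_upwards [eventually_fst_pos hp] with q hq
    exact pdv_psi hq
  have hs0 : p.1 ^ ((1:ℝ)/3) ≠ 0 := by positivity
  rw [pdv, h0.fderiv_eq]
  refine pdv_eq ((selfsimilar_contDiffAt 1 1 hp).differentiableAt (by norm_num)) ?_
  refine (psiF_scaled_hasDerivAt_v 1 ((p.1 ^ ((1:ℝ)/3)) ^ 1) (p.1 ^ ((1:ℝ)/3))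
    p.2).congr_deriv ?_
  field_simp

lemma pdx_psi {p : P2} (hp : 0 < p.1) :
    p.2 * pdx (fun q : P2 => psiL 0 q.1 q.2) p = psiF 2 (p.2 / p.1 ^ ((1:ℝ)/3)) := by
  rw [pdx_eq ((psiL_zero_contDiffAt hp).differentiableAt (by norm_num))
    (psiL_zero_hasDerivAt_x hp p.2), psiF_ode]
  ring

lemma iteratedDeriv_psi (k : ℕ) {x : ℝ} (hx : 0 < x) (v : ℝ) :
    iteratedDeriv k (fun w => psiL 0 x w) v
      = (x ^ ((1:ℝ)/3)) ^ 2 * psiF k (v / x ^ ((1:ℝ)/3)) / (x ^ ((1:ℝ)/3)) ^ k := by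
  have h : (fun w => psiL 0 x w)
      = fun w => (x ^ ((1:ℝ)/3)) ^ 2 * psiProfile ((x ^ ((1:ℝ)/3))⁻¹ * w) := by
    funext w
    rw [psiL_zero_eq hx, div_eq_inv_mul w]
  have hc : ContDiff ℝ k psiProfile := contDiff_infty.1 psiProfile_contDiff k
  rw [h, iteratedDeriv_const_mul_field, iteratedDeriv_comp_const_mul hc, psiF, div_eq_inv_mul v,
    inv_pow]
  ring

/-- `x ≤ v³` says exactly that the similarity variable is at least `1`. -/
lemma one_le_similarity {x v : ℝ} (hx : 0 < x) (hv : 0 < v) (h : x ≤ v ^ 3) :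
    1 ≤ v / x ^ ((1:ℝ)/3) := by
  have hs0 : 0 < x ^ ((1:ℝ)/3) := by positivity
  rw [one_le_div hs0]
  refine le_of_pow_le_pow_left₀ (n := 3) (by norm_num) hv.le ?_
  rwa [cbrt_pow_three hx]

end Psi

theorem statement_19 :
    -- (i)
    (ContDiffOn ℝ 2 (fun p : P2 => psiL 0 p.1 p.2) (Set.Ioi (0:ℝ) ×ˢ (Set.univ : Set ℝ)) ∧
      ∀ p ∈ Set.Ioi (0:ℝ) ×ˢ (Set.univ : Set ℝ),
        p.2 * pdx (fun q : P2 => psiL 0 q.1 q.2) p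
          = pdv (pdv (fun q : P2 => psiL 0 q.1 q.2)) p) ∧
    -- (ii)
    (∃ cs : ℝ, cs ≠ 0 ∧ ∀ v : ℝ, 0 < v →
      Tendsto (fun x => psiL 0 x v) (nhdsWithin 0 (Set.Ioi 0)) (nhds (cs * v ^ 2))) ∧
    -- (iii)
    (∀ l : ℕ, 1 ≤ l → ∀ x v : ℝ, 0 < x →
      HasDerivAt (fun s => psiL l s v) ((3 * (l : ℝ) + 2) / 3 * psiL (l - 1) x v) x) ∧
    -- (iv)
    (∀ ε : ℝ, 0 < ε → ε < 1/3 → ∃ c : ℝ, 0 < c ∧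
      ∀ v ∈ Set.Ioc (0:ℝ) 1, ∀ x₁ x₂ : ℝ,
        0 < x₁ → x₁ ≤ v ^ (1/ε) → 0 < x₂ → x₂ ≤ v ^ (1/ε) →
        |psiL 0 x₁ v - psiL 0 x₂ v| ≤ c * |x₁ - x₂| ^ (1 - ε)) ∧
    -- (v)
    (∀ k : ℕ, ∃ c : ℝ, 0 < c ∧
      ∀ v ∈ Set.Ioc (0:ℝ) 1, ∀ x : ℝ,
        0 < x → x ≤ v ^ (k + 1) → x ≤ v ^ 3 →
        |iteratedDeriv k (fun w => psiL 0 x w) v| ≤ c) := by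
  obtain ⟨⟨c, hc0, hc⟩, ⟨K₀, hK₀⟩, ⟨K₁, hK₁⟩, ⟨K₂, hK₂⟩, hK₃⟩ :=
    profile_bounds psiF_hasDerivAt psiF_ode psiF_zero_pos psiF_one_pos
  refine ⟨⟨?_, ?_⟩, ⟨c, hc0.ne', ?_⟩, ?_, ?_, ?_⟩
  · intro p hp
    exact (psiL_zero_contDiffAt hp.1).contDiffWithinAt
  · intro p hp
    rw [pdx_psi hp.1, pdv_pdv_psi hp.1]
  · intro v hv
    have hcb : Tendsto (fun x : ℝ => x ^ ((1:ℝ)/3)) (nhdsWithin 0 (Ioi 0))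
        (nhdsWithin 0 (Ioi 0)) := by
      refine tendsto_nhdsWithin_iff.2 ⟨?_, ?_⟩
      · have h := (Real.continuousAt_rpow_const 0 ((1:ℝ)/3) (Or.inr (by norm_num))).tendsto
        rw [Real.zero_rpow (by norm_num)] at h
        exact h.mono_left nhdsWithin_le_nhds
      · filter_upwards [self_mem_nhdsWithin] with x hx
        exact Real.rpow_pos_of_pos hx _
    have hy : Tendsto (fun x : ℝ => v / x ^ ((1:ℝ)/3)) (nhdsWithin 0 (Ioi 0)) atTop := by
      simp only [div_eq_mul_inv v]
      exact (tendsto_inv_nhdsGT_zero.comp hcb).const_mul_atTop hv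
    refine ((hc.comp hy).mul_const (v ^ 2)).congr' ?_
    filter_upwards [self_mem_nhdsWithin] with x hx
    have hs0 : 0 < x ^ ((1:ℝ)/3) := Real.rpow_pos_of_pos hx _
    rw [psiL_zero_eq hx v, ← psiF_zero]
    simp only [Function.comp]
    field_simp
  · intro l hl x v hx
    obtain ⟨m, rfl⟩ : ∃ m, l = m + 1 := ⟨l - 1, by omega⟩
    exact psiL_hasDerivAt_x m hx v
  · intro ε hε hε3
    have hK₂0 : 0 ≤ K₂ := (abs_nonneg _).trans (hK₂ 1 le_rfl)
    refine ⟨K₂ + 1, by linarith, ?_⟩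
    intro v hv x₁ x₂ hx₁ hx₁v hx₂ hx₂v
    have hv0 : 0 < v := hv.1
    have hcube : v ^ (1/ε) ≤ v ^ 3 := by
      rw [← Real.rpow_natCast]
      refine Real.rpow_le_rpow_of_exponent_ge hv0 hv.2 ?_
      rw [le_div_iff₀ hε]
      push_cast
      linarith
    -- `|∂ₓψ₀| ≤ K₂ / v` on `x ≤ v³`, because `v ∂ₓψ₀ = F''(v / x^(1/3))`
    have hLip : |psiL 0 x₁ v - psiL 0 x₂ v| ≤ K₂ / v * |x₁ - x₂| := by
      refine (convex_Ioc (0 : ℝ) (v ^ 3)).norm_image_sub_le_of_norm_hasDerivWithin_le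
        (f := fun s => psiL 0 s v)
        (fun x hx => (psiL_zero_hasDerivAt_x hx.1 v).hasDerivWithinAt) ?_
        ⟨hx₂, hx₂v.trans hcube⟩ ⟨hx₁, hx₁v.trans hcube⟩
      intro x hx
      have hs0 : 0 < x ^ ((1:ℝ)/3) := Real.rpow_pos_of_pos hx.1 _
      have h1 := hK₂ _ (one_le_similarity hx.1 hv0 hx.2)
      rw [psiF_ode] at h1
      rw [Real.norm_eq_abs, le_div_iff₀ hv0, ← abs_of_pos hv0, ← abs_mul, abs_of_pos hv0]
      refine le_trans (le_of_eq ?_) h1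
      congr 1
      ring
    rcases eq_or_ne x₁ x₂ with rfl | hne
    · simp only [sub_self, abs_zero]
      exact mul_nonneg (by linarith) (Real.rpow_nonneg le_rfl _)
    have hd : 0 < |x₁ - x₂| := abs_pos.2 (sub_ne_zero.2 hne)
    have hdle : |x₁ - x₂| ≤ v ^ (1/ε) := by
      rw [abs_le]
      constructor <;> linarith
    have hdε : |x₁ - x₂| ^ ε ≤ v := by
      calc |x₁ - x₂| ^ ε ≤ (v ^ (1/ε)) ^ ε := Real.rpow_le_rpow hd.le hdle hε.le
        _ = v := by
          rw [← Real.rpow_mul hv0.le, one_div_mul_cancel hε.ne', Real.rpow_one]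
    have hsplit : |x₁ - x₂| = |x₁ - x₂| ^ ε * |x₁ - x₂| ^ (1 - ε) := by
      rw [← Real.rpow_add hd, add_sub_cancel, Real.rpow_one]
    have hnn : 0 ≤ |x₁ - x₂| ^ (1 - ε) := Real.rpow_nonneg hd.le _
    calc |psiL 0 x₁ v - psiL 0 x₂ v| ≤ K₂ / v * |x₁ - x₂| := hLip
      _ = K₂ / v * (|x₁ - x₂| ^ ε * |x₁ - x₂| ^ (1 - ε)) := by rw [← hsplit]
      _ ≤ K₂ / v * (v * |x₁ - x₂| ^ (1 - ε)) := by gcongr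
      _ = K₂ * |x₁ - x₂| ^ (1 - ε) := by field_simp
      _ ≤ (K₂ + 1) * |x₁ - x₂| ^ (1 - ε) := by
        gcongr
        linarith
  · intro k
    rcases k with _ | _ | _ | n
    · refine ⟨|K₀| + 1, by positivity, fun v hv x hx _ hx3 => ?_⟩
      have hs0 : 0 < x ^ ((1:ℝ)/3) := by positivity
      have h1 := hK₀ _ (one_le_similarity hx hv.1 hx3)
      rw [iteratedDeriv_psi _ hx, pow_zero, div_one, abs_mul, abs_of_pos (by positivity)]
      have hv1 : v ^ 2 ≤ 1 := pow_le_one₀ hv.1.le hv.2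
      calc _ ≤ (x ^ ((1:ℝ)/3)) ^ 2 * (K₀ * (v / x ^ ((1:ℝ)/3)) ^ 2) := by gcongr
        _ = K₀ * v ^ 2 := by field_simp
        _ ≤ |K₀| * 1 := mul_le_mul (le_abs_self _) hv1 (by positivity) (abs_nonneg _)
        _ ≤ _ := by linarith
    · refine ⟨|K₁| + 1, by positivity, fun v hv x hx _ hx3 => ?_⟩
      have hs0 : 0 < x ^ ((1:ℝ)/3) := by positivity
      have h1 := hK₁ _ (one_le_similarity hx hv.1 hx3)
      rw [iteratedDeriv_psi _ hx, abs_div, abs_mul, abs_of_pos (pow_pos hs0 2),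
        abs_of_pos (pow_pos hs0 _)]
      simp only [zero_add, pow_one]
      calc _ ≤ (x ^ ((1:ℝ)/3)) ^ 2 * (K₁ * (v / x ^ ((1:ℝ)/3))) / x ^ ((1:ℝ)/3) := by gcongr
        _ = K₁ * v := by field_simp
        _ ≤ |K₁| * 1 := mul_le_mul (le_abs_self _) hv.2 hv.1.le (abs_nonneg _)
        _ ≤ _ := by linarith
    · refine ⟨|K₂| + 1, by positivity, fun v hv x hx _ hx3 => ?_⟩
      have hs0 : 0 < x ^ ((1:ℝ)/3) := by positivity
      have h1 := hK₂ _ (one_le_similarity hx hv.1 hx3)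
      rw [iteratedDeriv_psi _ hx]
      simp only [zero_add, Nat.reduceAdd]
      rw [mul_div_cancel_left₀ _ (pow_pos hs0 2).ne']
      linarith [le_abs_self K₂]
    · obtain ⟨K, hK⟩ := hK₃ n
      refine ⟨|K| + 1, by positivity, fun v hv x hx hxk hx3 => ?_⟩
      have hv0 : 0 < v := hv.1
      have hs0 : 0 < x ^ ((1:ℝ)/3) := by positivity
      have hs3 := cbrt_pow_three hx
      have h1 := hK _ (one_le_similarity hx hv.1 hx3)
      rw [iteratedDeriv_psi _ hx, abs_div, abs_mul, abs_of_pos (pow_pos hs0 2),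
        abs_of_pos (pow_pos hs0 _)]
      rw [show n + 1 + 1 + 1 = n + 3 by ring] at *
      rw [← le_div_iff₀ (by positivity)] at h1
      have hxv : x / v ^ (n + 4) ≤ 1 := by
        rw [div_le_one (by positivity)]
        exact hxk
      calc _ ≤ (x ^ ((1:ℝ)/3)) ^ 2 * (K / (v / x ^ ((1:ℝ)/3)) ^ (n + 4))
            / (x ^ ((1:ℝ)/3)) ^ (n + 3) := by gcongr
        _ = K * ((x ^ ((1:ℝ)/3)) ^ 3 / v ^ (n + 4)) := by
          rw [div_pow]
          field_simp
          ring
        _ = K * (x / v ^ (n + 4)) := by rw [hs3]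
        _ ≤ |K| * 1 := mul_le_mul (le_abs_self _) hxv (by positivity) (abs_nonneg _)
        _ ≤ _ := by linarith
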